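/- (Hall) Let A be a finite abelian group of order n, let a_1, ..., a_n be an enumeration of the elements of A, and let d_1, ..., d_n ∈ A satisfy d_1 + ... + d_n = 0. Then there exist permutations σ, τ ∈ S_n such that a_i - a_{σ(i)} = d_{τ(i)} for all i. -/

import Mathlib

/-!
Write the family `d` as a difference `x - y` of two bijections `x y : ι ≃ A`. Finitely
supported families with zero sum arise from the zero family by successive changes at two indices
`j ≠ k` that keep `d j + d k` fixed, so it suffices to carry out one such change.

Replacing `(x, y)` by its reflection `(c - y, c - x)` preserves all differences, and this may be
done on any union of cycles of the permutation `ρ` with `x i + y (ρ i) = c`. For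
`c = y j + y k + d k`, reflecting on the cycle of `k` and then interchanging the values of `y` at
`j` and `k` produces the desired family, provided that `j` is not on this cycle. If it is,
interchange the values of `y` at `j` and `k` beforehand: this multiplies `ρ` by a transposition,
which splits the cycle and separates `j` from `k`.
-/

open Equiv Equiv.Perm

section SwapMul

variable {ι : Type*} [DecidableEq ι] {r : Perm ι} {j k : ι}

lemma not_sameCycle_swap_mul_of_pow_apply_eq (hjk : j ≠ k) {n : ℕ} (hn : (r ^ n) k = j) :
    ¬ (swap j k * r).SameCycle k j := by
  have hex : ∃ n : ℕ, (r ^ n) k = j := ⟨n, hn⟩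
  obtain ⟨m, hm, hfirst⟩ : ∃ m : ℕ, (r ^ m) k = j ∧ ∀ t < m, (r ^ t) k ≠ j :=
    ⟨Nat.find hex, Nat.find_spec hex, fun _ ht => Nat.find_min hex ht⟩
  have hpos : 0 < m := by
    rcases Nat.eq_zero_or_pos m with rfl | hpos
    · exact absurd hm.symm hjk
    · exact hpos
  have hno_return : ∀ t, 0 < t → t < m → (r ^ t) k ≠ k := by
    intro t ht htm hreturn
    refine hfirst (m - t) (by omega) ?_
    rw [← hm, ← Nat.sub_add_cancel htm.le, pow_add, Perm.mul_apply, hreturn, Nat.add_sub_cancel]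
  let segment : Set ι := (fun t : ℕ => (r ^ t) k) '' Set.Iio m
  have hmaps : Set.MapsTo (swap j k * r) segment segment := by
    rintro _ ⟨t, ht, rfl⟩
    have hstep : (swap j k * r) ((r ^ t) k) = swap j k ((r ^ (t + 1)) k) := by
      simp only [pow_succ', Perm.mul_apply]
    rw [hstep]
    rcases (Nat.succ_le_of_lt ht).eq_or_lt with hlast | hlt
    · exact ⟨0, hpos, by simp [← Nat.succ_eq_add_one, hlast, hm]⟩
    · exact ⟨t + 1, hlt,
        (swap_apply_of_ne_of_ne (hfirst _ hlt) (hno_return _ t.succ_pos hlt)).symm⟩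
  have hbij : Set.BijOn (swap j k * r) segment segment :=
    (((Set.finite_Iio m).image _).injOn_iff_bijOn_of_mapsTo hmaps).1 (Equiv.injective _).injOn
  rintro ⟨z, hz⟩
  obtain ⟨t, ht, htj⟩ : j ∈ segment := hz ▸ (hbij.perm_zpow z).mapsTo ⟨0, hpos, rfl⟩
  exact hfirst t ht htj

lemma not_sameCycle_swap_mul_of_sameCycle (hjk : j ≠ k) (h : r.SameCycle k j) :
    ¬ (swap j k * r).SameCycle k j := by
  obtain ⟨z, hz⟩ := h
  obtain ⟨n, rfl | rfl⟩ := z.eq_nat_or_neg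
  · exact not_sameCycle_swap_mul_of_pow_apply_eq hjk (by simpa using hz)
  · have hn : (r ^ n) j = k := by simp [← hz]
    rw [sameCycle_comm, swap_comm]
    exact not_sameCycle_swap_mul_of_pow_apply_eq hjk.symm hn

end SwapMul

section Differences

variable {ι A : Type*} [AddCommGroup A]

/-- The permutation `ρ` of the indices with `x i + y (ρ i) = c`, matching the index of each `g : A`
under `x` with the index of its reflection `c - g` under `y`. -/
def complementPerm (x y : ι ≃ A) (c : A) : Perm ι :=
  (x.trans (Equiv.subLeft c)).trans y.symm

lemma apply_complementPerm (x y : ι ≃ A) (c : A) (i : ι) :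
    y (complementPerm x y c i) = c - x i := by
  simp [complementPerm]

lemma apply_complementPerm_inv (x y : ι ≃ A) (c : A) (i : ι) :
    x ((complementPerm x y c)⁻¹ i) = c - y i := by
  simp [complementPerm, Perm.inv_def, sub_eq_neg_add]

lemma complementPerm_swap_trans [DecidableEq ι] (x y : ι ≃ A) (c : A) (j k : ι) :
    complementPerm x ((swap j k).trans y) c = swap j k * complementPerm x y c :=
  rfl

lemma exists_reflect_on_cycle (x y : ι ≃ A) (c : A) (k : ι) :
    ∃ x' y' : ι ≃ A,
      (∀ i, (complementPerm x y c).SameCycle k i → x' i = c - y i ∧ y' i = c - x i) ∧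
      (∀ i, ¬ (complementPerm x y c).SameCycle k i → x' i = x i ∧ y' i = y i) := by
  classical
  let ρ := complementPerm x y c
  refine ⟨(ρ.cycleOf k)⁻¹.trans x, (ρ.cycleOf k).trans y, fun i hi => ?_, fun i hi => ?_⟩
  · rw [trans_apply, trans_apply, cycleOf_inv, hi.inv.cycleOf_apply, hi.cycleOf_apply]
    exact ⟨apply_complementPerm_inv x y c i, apply_complementPerm x y c i⟩
  · have hi_inv : ¬ ρ⁻¹.SameCycle k i := mt sameCycle_inv.1 hi
    rw [trans_apply, trans_apply, cycleOf_inv, cycleOf_apply_of_not_sameCycle hi_inv,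
      cycleOf_apply_of_not_sameCycle hi]
    exact ⟨rfl, rfl⟩

/-- The family `d` is the difference of two bijective indexings of `A` by `ι`. -/
def IsEquivDifference (d : ι → A) : Prop :=
  ∃ x y : ι ≃ A, ∀ i, x i - y i = d i

lemma isEquivDifference_of_not_sameCycle {x y : ι ≃ A} {d : ι → A} {j k : ι}
    (hoff : ∀ i, i ≠ j → i ≠ k → x i - y i = d i)
    (hsum : x j - y j + (x k - y k) = d j + d k)
    (hsep : ¬ (complementPerm x y (y j + y k + d k)).SameCycle k j) :
    IsEquivDifference d := by
  classical
  obtain ⟨x', y', hon, hout⟩ := exists_reflect_on_cycle x y (y j + y k + d k) k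
  obtain ⟨hxk, hyk⟩ := hon k (SameCycle.refl _ k)
  obtain ⟨hxj, hyj⟩ := hout j hsep
  refine ⟨x', (swap j k).trans y', fun i => ?_⟩
  rw [trans_apply]
  obtain rfl | hij := eq_or_ne i j
  · rw [swap_apply_left, hxj, hyk, ← add_left_inj (d k), ← hsum]
    abel
  obtain rfl | hik := eq_or_ne i k
  · rw [swap_apply_right, hxk, hyj]
    abel
  rw [swap_apply_of_ne_of_ne hij hik, ← hoff i hij hik]
  by_cases hi : (complementPerm x y (y j + y k + d k)).SameCycle k i
  · rw [(hon i hi).1, (hon i hi).2, sub_sub_sub_cancel_left]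
  · rw [(hout i hi).1, (hout i hi).2]

lemma IsEquivDifference.of_eq_off_pair {d d' : ι → A} (hd : IsEquivDifference d) {j k : ι}
    (hjk : j ≠ k) (hoff : ∀ i, i ≠ j → i ≠ k → d i = d' i) (hsum : d j + d k = d' j + d' k) :
    IsEquivDifference d' := by
  classical
  obtain ⟨x, y, hxy⟩ := hd
  by_cases hcycle : (complementPerm x y (y j + y k + d' k)).SameCycle k j
  · refine isEquivDifference_of_not_sameCycle (x := x) (y := (swap j k).trans y) (j := j) (k := k)
      (fun i hij hik => ?_) ?_ ?_
    · rw [trans_apply, swap_apply_of_ne_of_ne hij hik, hxy, hoff i hij hik]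
    · simp only [trans_apply, swap_apply_left, swap_apply_right]
      rw [← hsum, ← hxy, ← hxy]
      abel
    · simp only [trans_apply, swap_apply_left, swap_apply_right]
      rw [complementPerm_swap_trans, add_comm (y k)]
      exact not_sameCycle_swap_mul_of_sameCycle hjk hcycle
  · exact isEquivDifference_of_not_sameCycle
      (fun i hij hik => (hxy i).trans (hoff i hij hik)) (by rw [hxy, hxy, hsum]) hcycle

lemma isEquivDifference_sub_single_sum (a : ι ≃ A) (k : ι) (d : ι →₀ A) :
    IsEquivDifference (d - Finsupp.single k (d.sum fun _ g => g)) := by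
  induction d using Finsupp.induction with
  | zero => exact ⟨a, a, by simp⟩
  | single_add j g d _ _ ih =>
    have hsum : ((Finsupp.single j g + d).sum fun _ g => g) = g + d.sum fun _ g => g := by
      rw [Finsupp.sum_add_index' (fun _ => rfl) (fun _ _ _ => rfl), Finsupp.sum_single_index rfl]
    rw [hsum]
    obtain rfl | hjk := eq_or_ne j k
    · rwa [Finsupp.single_add, add_sub_add_left_eq_sub]
    · refine ih.of_eq_off_pair hjk (fun i hij hik => ?_) ?_
      · simp [hij, hik]
      · simp only [Finsupp.sub_apply, Finsupp.add_apply, Finsupp.single_eq_same,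
          Finsupp.single_eq_of_ne hjk, Finsupp.single_eq_of_ne hjk.symm]
        abel

theorem isEquivDifference_of_sum_eq_zero (a : ι ≃ A) {d : ι →₀ A}
    (hd : (d.sum fun _ g => g) = 0) : IsEquivDifference d := by
  simpa [hd] using isEquivDifference_sub_single_sum a (a.symm 0) d

theorem hall_permutation_sums_general (a : ι ≃ A) (d : ι →₀ A)
    (hd : (d.sum fun _ g => g) = 0) :
    ∃ σ τ : Perm ι, ∀ i, a i - a (σ i) = d (τ i) := by
  obtain ⟨x, y, hxy⟩ := isEquivDifference_of_sum_eq_zero a hd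
  refine ⟨((a.trans x.symm).trans y).trans a.symm, a.trans x.symm, fun i => ?_⟩
  simp [← hxy]

end Differences

theorem hall_permutation_sums (A : Type*) [AddCommGroup A] [Fintype A] (n : ℕ)
    (a : Fin n ≃ A) (d : Fin n → A) (hd : ∑ i, d i = 0) :
    ∃ σ τ : Equiv.Perm (Fin n), ∀ i, a i - a (σ i) = d (τ i) :=
  hall_permutation_sums_general a (Finsupp.equivFunOnFinite.symm d)
    (by simpa [Finsupp.sum_fintype] using hd)
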